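/- Let α > 0, let n ∈ ℤ, and denote I_n = [(n−1)π/α, (nπ+1)/α]. Let q : ℝ → ℝ be differentiable on I_n with |q(k)| < 1, |arcsin(q(k))| < 1/2, and |q'(k)/√(1 − q(k)²)| < α/2 for all k ∈ I_n. Define h_n(k) = kα − (−1)ⁿ·arcsin(q(k)) − nπ. Then h_n has exactly one zero in I_n: there exists a unique k ∈ I_n with h_n(k) = 0. -/

import Mathlib

open Real

/-!
The slope of `arcsin ∘ q` is less than `α` in absolute value, so `h` is strictly increasing. At the
left endpoint `h = -π ± arcsin (q k)`, which is negative because `|arcsin| ≤ π / 2`; at the right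
endpoint `h = 1 ± arcsin (q k)`, which is nonnegative as soon as `|arcsin (q k)| ≤ 1` there. The
intermediate value theorem gives the zero, monotonicity its uniqueness.
-/

theorem existsUnique_eq_of_hasDerivAt_pos {a b y : ℝ} {f f' : ℝ → ℝ} (hab : a ≤ b)
    (hf : ContinuousOn f (Set.Icc a b)) (hf' : ∀ x ∈ Set.Ioo a b, HasDerivAt f (f' x) x)
    (hpos : ∀ x ∈ Set.Ioo a b, 0 < f' x) (hy : y ∈ Set.Icc (f a) (f b)) :
    ∃! x, x ∈ Set.Icc a b ∧ f x = y := by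
  rw [← interior_Icc] at hf' hpos
  have hmono : StrictMonoOn f (Set.Icc a b) :=
    strictMonoOn_of_hasDerivWithinAt_pos (convex_Icc a b) hf
      (fun x hx => (hf' x hx).hasDerivWithinAt) hpos
  obtain ⟨x, hx, hfx⟩ := intermediate_value_Icc hab hf hy
  exact ⟨x, ⟨hx, hfx⟩, fun z ⟨hz, hfz⟩ => hmono.injOn hz hx (hfz.trans hfx.symm)⟩

theorem hasDerivAt_arcsin_comp {q : ℝ → ℝ} {q' x : ℝ} (hq : HasDerivAt q q' x)
    (h₁ : q x ≠ -1) (h₂ : q x ≠ 1) :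
    HasDerivAt (fun x => arcsin (q x)) (q' / √(1 - q x ^ 2)) x :=
  ((hasDerivAt_arcsin h₁ h₂).comp x hq).congr_deriv (one_div_mul_eq_div _ _)

theorem existsUnique_mul_sub_mul_arcsin_eq {a b α s c : ℝ} {q : ℝ → ℝ} (hab : a ≤ b)
    (hq_cont : ContinuousOn q (Set.Icc a b)) (hq_diff : DifferentiableOn ℝ q (Set.Ioo a b))
    (hq_lt : ∀ x ∈ Set.Ioo a b, |q x| < 1)
    (hq' : ∀ x ∈ Set.Ioo a b, s * (deriv q x / √(1 - q x ^ 2)) < α)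
    (ha : a * α - s * arcsin (q a) ≤ c) (hb : c ≤ b * α - s * arcsin (q b)) :
    ∃! x, x ∈ Set.Icc a b ∧ x * α - s * arcsin (q x) = c := by
  have hderiv : ∀ x ∈ Set.Ioo a b, HasDerivAt (fun x => x * α - s * arcsin (q x))
      (α - s * (deriv q x / √(1 - q x ^ 2))) x := fun x hx =>
    have hqx := (hq_diff.differentiableAt (isOpen_Ioo.mem_nhds hx)).hasDerivAt
    have harcsin := hasDerivAt_arcsin_comp hqx (neg_lt_of_abs_lt (hq_lt x hx)).ne'
      (lt_of_abs_lt (hq_lt x hx)).ne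
    (hasDerivAt_mul_const α).sub (harcsin.const_mul s)
  exact existsUnique_eq_of_hasDerivAt_pos hab (by fun_prop) hderiv
    (fun x hx => sub_pos.mpr (hq' x hx)) ⟨ha, hb⟩

theorem abs_neg_one_zpow_mul {K : Type*} [Field K] [LinearOrder K] [IsStrictOrderedRing K]
    (n : ℤ) (x : K) : |(-1 : K) ^ n * x| = |x| := by
  rw [abs_mul, abs_neg_one_zpow, one_mul]

theorem abs_arcsin_le_pi_div_two (x : ℝ) : |arcsin x| ≤ π / 2 :=
  abs_le.mpr ⟨neg_pi_div_two_le_arcsin x, arcsin_le_pi_div_two x⟩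

theorem sub_one_mul_pi_div_le {α : ℝ} (hα : 0 < α) (x : ℝ) :
    (x - 1) * π / α ≤ (x * π + 1) / α := by
  gcongr
  linarith [pi_pos]

theorem unique_zero_of_hn_general
    (α : ℝ) (hα : 0 < α) (n : ℤ)
    (q : ℝ → ℝ)
    (hq_cont : ContinuousOn q (Set.Icc (((n : ℝ) - 1) * π / α) (((n : ℝ) * π + 1) / α)))
    (hq_diff : DifferentiableOn ℝ q (Set.Ioo (((n : ℝ) - 1) * π / α) (((n : ℝ) * π + 1) / α)))
    (hq_lt : ∀ k ∈ Set.Ioo (((n : ℝ) - 1) * π / α) (((n : ℝ) * π + 1) / α), |q k| < 1)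
    (harcsin : |arcsin (q (((n : ℝ) * π + 1) / α))| ≤ 1)
    (hq' : ∀ k ∈ Set.Ioo (((n : ℝ) - 1) * π / α) (((n : ℝ) * π + 1) / α),
      |deriv q k / √(1 - q k ^ 2)| < α)
    (h : ℝ → ℝ)
    (hh : ∀ k, h k = k * α - (-1 : ℝ) ^ n * arcsin (q k) - (n : ℝ) * π) :
    ∃! k : ℝ, k ∈ Set.Icc (((n : ℝ) - 1) * π / α) (((n : ℝ) * π + 1) / α) ∧ h k = 0 := by
  simp only [hh, sub_eq_zero]
  refine existsUnique_mul_sub_mul_arcsin_eq (sub_one_mul_pi_div_le hα n) hq_cont hq_diff hq_lt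
    (fun k hk => lt_of_abs_lt ((abs_neg_one_zpow_mul n _).trans_lt (hq' k hk))) ?left ?right
  case left =>
    have harcsin_left := abs_arcsin_le_pi_div_two (q (((n : ℝ) - 1) * π / α))
    rw [← abs_neg_one_zpow_mul n] at harcsin_left
    rw [div_mul_cancel₀ _ hα.ne']
    linarith [neg_le_of_abs_le harcsin_left, pi_pos]
  case right =>
    rw [← abs_neg_one_zpow_mul n] at harcsin
    rw [div_mul_cancel₀ _ hα.ne']
    linarith [le_of_abs_le harcsin]

/-- The central existence-and-uniqueness lemma in the proof of Theorem 3.2: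
the function `h_n(k) = kα - (-1)ⁿ arcsin(q(k)) - nπ` has exactly one zero in
the interval `I_n = [(n-1)π/α, (nπ+1)/α]`. -/
theorem unique_zero_of_hn
    (α : ℝ) (hα : 0 < α) (n : ℤ)
    (q : ℝ → ℝ)
    (hq_diff : DifferentiableOn ℝ q (Set.Icc (((n : ℝ) - 1) * π / α) (((n : ℝ) * π + 1) / α)))
    (hq_lt : ∀ k ∈ Set.Icc (((n : ℝ) - 1) * π / α) (((n : ℝ) * π + 1) / α), |q k| < 1)
    (harcsin : ∀ k ∈ Set.Icc (((n : ℝ) - 1) * π / α) (((n : ℝ) * π + 1) / α),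
      |Real.arcsin (q k)| < 1 / 2)
    (hq' : ∀ k ∈ Set.Icc (((n : ℝ) - 1) * π / α) (((n : ℝ) * π + 1) / α),
      |deriv q k / Real.sqrt (1 - (q k) ^ 2)| < α / 2)
    (h : ℝ → ℝ)
    (hh : ∀ k, h k = k * α - (-1 : ℝ) ^ n * Real.arcsin (q k) - (n : ℝ) * π) :
    ∃! k : ℝ, k ∈ Set.Icc (((n : ℝ) - 1) * π / α) (((n : ℝ) * π + 1) / α) ∧ h k = 0 :=
  unique_zero_of_hn_general α hα n q hq_diff.continuousOn
    (hq_diff.mono Set.Ioo_subset_Icc_self) (fun k hk => hq_lt k (Set.Ioo_subset_Icc_self hk))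
    (by linarith [harcsin _ (Set.right_mem_Icc.mpr (sub_one_mul_pi_div_le hα n))])
    (fun k hk => (hq' k (Set.Ioo_subset_Icc_self hk)).trans (half_lt_self hα)) h hh
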